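/- Let F_s be a positional scoring rule with s_1 ≠ s_2. Define, for ℓ ∈ {1, …, m−1}: U_s(1) = 1/(s_1 − s_2) − 1, and for ℓ ≥ 2, U_s(ℓ) = min( 1/(s_ℓ − s_{ℓ+1}) − 1 , ((n−1)(s̄↑_2 − s̄↓_{ℓ̄}) + 1/2)/(s̄↑_{ℓ̄} − s_{ℓ+1}) ), where 1/(s_ℓ − s_{ℓ+1}) is interpreted as ∞ when s_ℓ = s_{ℓ+1}. Then the manipulation potential of F_s satisfies Φ(F_s) ≤ max over ℓ ∈ {1, …, m−1} of U_s(ℓ); that is, F_s is k-augmentation strategyproof for every k ≥ max_ℓ U_s(ℓ). -/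

import Mathlib

open Finset

/-- A strict linear preference order over `m` candidates, encoded as the permutation sending
each candidate to its rank; rank `0` is the most preferred position, so
`c ≻ c'` iff `p c < p c'`. -/
abbrev Pref (m : ℕ) := Equiv.Perm (Fin m)

/-- A profile of `N` voters, each with a strict preference over `m` candidates. -/
abbrev Profile (m N : ℕ) := Fin N → Pref m

/-- A social choice correspondence: for each number `N` of voters, it maps each `N`-voter
profile to a set of (tied) winners. -/
abbrev SCC (m : ℕ) := (N : ℕ) → Profile m N → Finset (Fin m)

/-- The profile `P` with `k` extra copies of voter `i`'s preference appended. -/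
def addCopies {m n : ℕ} (P : Profile m n) (i : Fin n) (k : ℕ) : Profile m (n + k) :=
  fun j => if h : (j : ℕ) < n then P ⟨j, h⟩ else P i

/-- Break a tie among the candidates in `A` using the linear tie-breaking order `τ`:
the winner is the `τ`-maximal (lowest `τ`-rank) element of `A`. -/
noncomputable def tiebreak {m : ℕ} [NeZero m] (τ : Pref m) (A : Finset (Fin m)) : Fin m :=
  if h : A.Nonempty then τ.symm ((A.image (fun c => τ c)).min' (h.image _)) else 0

/-- `F` is `k`-augmentation strategyproof on `n`-voter profiles: for every tie-breaker `τ`,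
profile `P`, voter `i`, and alternative preference `q`, voter `i` weakly prefers the outcome
obtained by adding `k` truthful copies of her vote to the outcome of the manipulation `q`. -/
def kASP (m n : ℕ) [NeZero m] (F : SCC m) (k : ℕ) : Prop :=
  ∀ (τ : Pref m) (P : Profile m n) (i : Fin n) (q : Pref m),
    (P i) (tiebreak τ (F (n + k) (addCopies P i k))) ≤
      (P i) (tiebreak τ (F n (Function.update P i q)))

/-- The manipulation potential of `F` on `n`-voter profiles: the least `k` such that `F` is
`k'`-augmentation strategyproof for all `k' ≥ k`, and `⊤` (i.e. `∞`) if no such `k` exists. -/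
noncomputable def manipPot (m n : ℕ) [NeZero m] (F : SCC m) : ℕ∞ :=
  sInf ((fun k : ℕ => (k : ℕ∞)) '' {k : ℕ | ∀ k' : ℕ, k ≤ k' → kASP m n F k'})

/-- Total score of candidate `c` under the (1-indexed) scoring vector `s`:
a voter ranking `c` in position `ℓ ∈ {1, …, m}` contributes `s ℓ` points. -/
noncomputable def posScore {m N : ℕ} (s : ℕ → ℝ) (P : Profile m N) (c : Fin m) : ℝ :=
  ∑ i : Fin N, s ((P i c : ℕ) + 1)

/-- The positional scoring rule with scoring vector `s`: candidates with maximal score win. -/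
noncomputable def posRule (m : ℕ) (s : ℕ → ℝ) : SCC m := fun _ P =>
  Finset.univ.filter (fun c => ∀ c', posScore s P c' ≤ posScore s P c)

/-- `s̄↑_ℓ`: the average of the top `ℓ` scores. -/
noncomputable def upave (s : ℕ → ℝ) (ℓ : ℕ) : ℝ := (∑ j ∈ Finset.Icc 1 ℓ, s j) / (ℓ : ℝ)

/-- `s̄↓_ℓ`: the average of the bottom `ℓ` scores (out of `m`). -/
noncomputable def downave (s : ℕ → ℝ) (m ℓ : ℕ) : ℝ :=
  (∑ j ∈ Finset.Icc (m - ℓ + 1) m, s j) / (ℓ : ℝ)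

/-- `ℓ̄ = max {ℓ' ∈ {1, …, ℓ−1} : s_{ℓ'} > s_{ℓ+1}}`. -/
noncomputable def lbar (s : ℕ → ℝ) (ℓ : ℕ) : ℕ :=
  ((Finset.Icc 1 (ℓ - 1)).filter (fun t => s (ℓ + 1) < s t)).sup id

/-- The upper-bound quantity `U_s(ℓ)`; when `s ℓ = s (ℓ+1)` the term `1/(s_ℓ − s_{ℓ+1}) − 1`
is interpreted as `∞`, so the `min` reduces to its second argument. -/
noncomputable def Uval (s : ℕ → ℝ) (n m ℓ : ℕ) : ℝ :=
  if ℓ = 1 then 1 / (s 1 - s 2) - 1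
  else
    if s ℓ = s (ℓ + 1) then
      (((n : ℝ) - 1) * (upave s 2 - downave s m (lbar s ℓ)) + 1 / 2) /
        (upave s (lbar s ℓ) - s (ℓ + 1))
    else
      min (1 / (s ℓ - s (ℓ + 1)) - 1)
        ((((n : ℝ) - 1) * (upave s 2 - downave s m (lbar s ℓ)) + 1 / 2) /
          (upave s (lbar s ℓ) - s (ℓ + 1)))

/-!
Suppose adding `k` truthful copies elects `w`, while misreporting elects a candidate `a` that the
voter prefers to `w`, her candidate in position `ℓ + 1`. Since `a` wins after the misreport, the
others' score of `w` exceeds that of `a` by at most `s 1 - s m = 1`.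

* The `k + 1` truthful votes give `a` at least `(k + 1) * (s ℓ - s (ℓ + 1))` more than `w`, so this
  is at most `1`; equality would tie `a` and `w` in both elections, and the tie-breaker would then
  elect the same candidate twice.
* In the augmented profile `w` scores at least the average score of the voter's top `ℓ̄` candidates,
  to which every other voter gives at least `s̄↓_ℓ̄` on average; and the others give `a` and `w`
  together at most `2 (n - 1) s̄↑_2`.

These two bounds on `k` contradict `U_s(ℓ) ≤ k`.
-/

section Tiebreak

variable {m : ℕ} [NeZero m] {τ : Pref m} {A B : Finset (Fin m)} {c : Fin m}

lemma apply_tiebreak (τ : Pref m) (hA : A.Nonempty) :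
    τ (tiebreak τ A) = (A.image τ).min' (hA.image τ) := by
  simp [tiebreak, hA]

lemma tiebreak_mem (τ : Pref m) (hA : A.Nonempty) : tiebreak τ A ∈ A := by
  have hmem := (A.image τ).min'_mem (hA.image τ)
  rwa [← apply_tiebreak τ hA, τ.injective.mem_finset_image] at hmem

lemma apply_tiebreak_le (τ : Pref m) (hc : c ∈ A) : τ (tiebreak τ A) ≤ τ c := by
  rw [apply_tiebreak τ ⟨c, hc⟩]
  exact min'_le _ _ (mem_image_of_mem τ hc)

lemma tiebreak_eq_of_mem_of_mem (hA : tiebreak τ B ∈ A) (hB : tiebreak τ A ∈ B) :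
    tiebreak τ A = tiebreak τ B :=
  τ.injective (le_antisymm (apply_tiebreak_le τ hA) (apply_tiebreak_le τ hB))

end Tiebreak

section Averages

variable {s : ℕ → ℝ} {m ℓ : ℕ}

lemma cast_mul_upave (s : ℕ → ℝ) (ℓ : ℕ) : ℓ * upave s ℓ = ∑ j ∈ Icc 1 ℓ, s j :=
  mul_div_cancel_of_imp' fun h => by simp [Nat.cast_eq_zero.mp h]

lemma cast_mul_downave (s : ℕ → ℝ) (m ℓ : ℕ) :
    ℓ * downave s m ℓ = ∑ j ∈ Icc (m - ℓ + 1) m, s j :=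
  mul_div_cancel_of_imp' fun h => by simp [Nat.cast_eq_zero.mp h]

lemma le_upave (hs : AntitoneOn s (Set.Icc 1 ℓ)) (hℓ : 1 ≤ ℓ) : s ℓ ≤ upave s ℓ := by
  have hsum : ℓ * s ℓ ≤ ℓ * upave s ℓ := by
    rw [cast_mul_upave]
    simpa using card_nsmul_le_sum (Icc 1 ℓ) s (s ℓ) fun j hj =>
      hs (by simpa using hj) ⟨hℓ, le_rfl⟩ (mem_Icc.mp hj).2
  exact le_of_mul_le_mul_left hsum (by exact_mod_cast hℓ)

lemma sum_le_sum_of_card_eq_of_threshold {ι M : Type*} [DecidableEq ι] [AddCommMonoid M]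
    [PartialOrder M] [IsOrderedCancelAddMonoid M] {f : ι → M} {A B : Finset ι} (t : M)
    (hcard : #A = #B) (hA : ∀ x ∈ A \ B, f x ≤ t) (hB : ∀ x ∈ B \ A, t ≤ f x) :
    ∑ x ∈ A, f x ≤ ∑ x ∈ B, f x := by
  rw [← sum_sdiff_le_sum_sdiff]
  calc ∑ x ∈ A \ B, f x ≤ #(A \ B) • t := sum_le_card_nsmul _ _ _ hA
    _ = #(B \ A) • t := by rw [card_sdiff_comm hcard]
    _ ≤ ∑ x ∈ B \ A, f x := card_nsmul_le_sum _ _ _ hB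

lemma sum_le_card_mul_upave (hs : AntitoneOn s (Set.Icc 1 m)) {A : Finset ℕ} (hA : A ⊆ Icc 1 m) :
    ∑ j ∈ A, s j ≤ #A * upave s #A := by
  have hcard : #A ≤ m := by simpa using card_le_card hA
  rw [cast_mul_upave]
  refine sum_le_sum_of_card_eq_of_threshold (s #A) (by simp) (fun j hj => ?_) fun j hj => ?_
  · obtain ⟨hjA, hj⟩ := mem_sdiff.mp hj
    have := card_pos.mpr ⟨j, hjA⟩
    have := mem_Icc.mp (hA hjA)
    rw [mem_Icc] at hj
    exact hs ⟨by omega, by omega⟩ ⟨by omega, by omega⟩ (by omega)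
  · have := mem_Icc.mp (mem_sdiff.mp hj).1
    exact hs ⟨by omega, by omega⟩ ⟨by omega, by omega⟩ (by omega)

lemma card_mul_downave_le_sum (hs : AntitoneOn s (Set.Icc 1 m)) {A : Finset ℕ}
    (hA : A ⊆ Icc 1 m) : #A * downave s m #A ≤ ∑ j ∈ A, s j := by
  have hcard : #A ≤ m := by simpa using card_le_card hA
  rw [cast_mul_downave]
  refine sum_le_sum_of_card_eq_of_threshold (s (m - #A + 1)) (by simp; omega)
    (fun j hj => ?_) fun j hj => ?_
  · have := mem_Icc.mp (mem_sdiff.mp hj).1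
    exact hs ⟨by omega, by omega⟩ ⟨by omega, by omega⟩ (by omega)
  · obtain ⟨hjA, hj⟩ := mem_sdiff.mp hj
    have := card_pos.mpr ⟨j, hjA⟩
    have := mem_Icc.mp (hA hjA)
    rw [mem_Icc] at hj
    exact hs ⟨by omega, by omega⟩ ⟨by omega, by omega⟩ (by omega)

end Averages

section Positions

variable {s : ℕ → ℝ} {m L : ℕ} (p : Pref m)

/-- The position of each candidate in the preference `p`, counted from `1` to match the indexing of
scoring vectors; an embedding, so that sums over candidates become sums over positions. -/
def position : Fin m ↪ ℕ :=
  p.toEmbedding.trans (Fin.valEmbedding.trans (addRightEmbedding 1))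

@[simp]
lemma position_apply (c : Fin m) : position p c = (p c : ℕ) + 1 := rfl

lemma position_mem_Icc (c : Fin m) : (p c : ℕ) + 1 ∈ Set.Icc 1 m := ⟨by omega, by omega⟩

lemma map_position_subset_Icc (T : Finset (Fin m)) : T.map (position p) ⊆ Icc 1 m := by
  intro j hj
  obtain ⟨c, -, rfl⟩ := mem_map.mp hj
  simp

lemma sum_position_le_card_mul_upave (hs : AntitoneOn s (Set.Icc 1 m)) (T : Finset (Fin m)) :
    ∑ c ∈ T, s ((p c : ℕ) + 1) ≤ #T * upave s #T := by
  simpa using sum_le_card_mul_upave hs (map_position_subset_Icc p T)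

lemma card_mul_downave_le_sum_position (hs : AntitoneOn s (Set.Icc 1 m)) (T : Finset (Fin m)) :
    #T * downave s m #T ≤ ∑ c ∈ T, s ((p c : ℕ) + 1) := by
  simpa using card_mul_downave_le_sum hs (map_position_subset_Icc p T)

/-- The `L` candidates ranked highest by the preference `p` (all of them if `m ≤ L`). -/
def topCandidates (L : ℕ) : Finset (Fin m) := univ.filter fun c => (p c : ℕ) < L

lemma map_position_topCandidates (hL : L ≤ m) :
    (topCandidates p L).map (position p) = Icc 1 L := by
  ext j
  simp only [topCandidates, mem_map, mem_filter, mem_univ, true_and, position_apply, mem_Icc]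
  constructor
  · rintro ⟨c, hc, rfl⟩
    omega
  · rintro ⟨hj₁, hjL⟩
    exact ⟨p.symm ⟨j - 1, by omega⟩, by simp; omega, by simp; omega⟩

lemma card_topCandidates (hL : L ≤ m) : #(topCandidates p L) = L := by
  rw [← card_map (position p), map_position_topCandidates p hL, Nat.card_Icc, Nat.add_sub_cancel]

lemma sum_topCandidates (s : ℕ → ℝ) (hL : L ≤ m) :
    ∑ c ∈ topCandidates p L, s ((p c : ℕ) + 1) = L * upave s L := by
  rw [cast_mul_upave, ← map_position_topCandidates p hL, sum_map]
  simp only [position_apply]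

lemma score_sub_score_le (hs : AntitoneOn s (Set.Icc 1 m)) (c d : Fin m) :
    s ((p c : ℕ) + 1) - s ((p d : ℕ) + 1) ≤ s 1 - s m := by
  have hm : 1 ≤ m := by have := c.is_lt; omega
  exact sub_le_sub
    (hs ⟨le_rfl, hm⟩ (position_mem_Icc p c) (position_mem_Icc p c).1)
    (hs (position_mem_Icc p d) ⟨hm, le_rfl⟩ (position_mem_Icc p d).2)

end Positions

section OthersScore

variable {m n : ℕ} {s : ℕ → ℝ}

/-- The score that candidate `c` receives in `P` from all voters but `i`. -/
noncomputable def othersScore (s : ℕ → ℝ) (P : Profile m n) (i : Fin n) (c : Fin m) : ℝ :=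
  ∑ j ∈ univ.erase i, s ((P j c : ℕ) + 1)

lemma posScore_eq_othersScore_add (s : ℕ → ℝ) (P : Profile m n) (i : Fin n) (c : Fin m) :
    posScore s P c = othersScore s P i c + s ((P i c : ℕ) + 1) :=
  (sum_erase_add _ _ (mem_univ i)).symm

lemma posScore_addCopies (s : ℕ → ℝ) (P : Profile m n) (i : Fin n) (k : ℕ) (c : Fin m) :
    posScore s (addCopies P i k) c =
      othersScore s P i c + ((k : ℝ) + 1) * s ((P i c : ℕ) + 1) := by
  have hsplit : posScore s (addCopies P i k) c = posScore s P c + k * s ((P i c : ℕ) + 1) := by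
    simp [posScore, Fin.sum_univ_add, addCopies]
  rw [hsplit, posScore_eq_othersScore_add s P i]
  ring

lemma posScore_update (s : ℕ → ℝ) (P : Profile m n) (i : Fin n) (q : Pref m) (c : Fin m) :
    posScore s (Function.update P i q) c = othersScore s P i c + s ((q c : ℕ) + 1) := by
  have hothers : othersScore s (Function.update P i q) i c = othersScore s P i c :=
    sum_congr rfl fun j hj => by rw [Function.update_of_ne (ne_of_mem_erase hj)]
  rw [posScore_eq_othersScore_add s _ i, hothers, Function.update_self]

lemma cast_card_univ_erase (i : Fin n) : ((#(univ.erase i) : ℕ) : ℝ) = n - 1 := by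
  rw [card_erase_of_mem (mem_univ i), card_univ, Fintype.card_fin, Nat.cast_pred i.pos]

lemma sum_othersScore_le (hs : AntitoneOn s (Set.Icc 1 m)) (P : Profile m n) (i : Fin n)
    (T : Finset (Fin m)) :
    ∑ c ∈ T, othersScore s P i c ≤ ((n : ℝ) - 1) * (#T * upave s #T) := by
  simp only [othersScore]
  rw [sum_comm, ← cast_card_univ_erase i, ← nsmul_eq_mul]
  exact sum_le_card_nsmul _ _ _ fun j _ => sum_position_le_card_mul_upave (P j) hs T

lemma le_sum_othersScore (hs : AntitoneOn s (Set.Icc 1 m)) (P : Profile m n) (i : Fin n)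
    (T : Finset (Fin m)) :
    ((n : ℝ) - 1) * (#T * downave s m #T) ≤ ∑ c ∈ T, othersScore s P i c := by
  simp only [othersScore]
  rw [sum_comm, ← cast_card_univ_erase i, ← nsmul_eq_mul]
  exact card_nsmul_le_sum _ _ _ fun j _ => card_mul_downave_le_sum_position (P j) hs T

end OthersScore

section Winners

variable {m n N k : ℕ} {s : ℕ → ℝ} {P : Profile m n} {i : Fin n} {q : Pref m} {a w : Fin m}

lemma mem_posRule {P : Profile m N} {c : Fin m} :
    c ∈ posRule m s N P ↔ ∀ d, posScore s P d ≤ posScore s P c := by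
  simp [posRule]

lemma mem_posRule_of_le {P : Profile m N} {c d : Fin m} (hc : c ∈ posRule m s N P)
    (hle : posScore s P c ≤ posScore s P d) : d ∈ posRule m s N P :=
  mem_posRule.mpr fun e => (mem_posRule.mp hc e).trans hle

lemma posRule_nonempty [NeZero m] (s : ℕ → ℝ) (P : Profile m N) : (posRule m s N P).Nonempty :=
  let ⟨c, hc⟩ := Finite.exists_max (posScore s P)
  ⟨c, mem_posRule.mpr hc⟩

lemma othersScore_sub_le_of_mem_posRule_update (hs : AntitoneOn s (Set.Icc 1 m))
    (ha : a ∈ posRule m s n (Function.update P i q)) (c : Fin m) :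
    othersScore s P i c - othersScore s P i a ≤ s 1 - s m := by
  have hle := mem_posRule.mp ha c
  rw [posScore_update, posScore_update] at hle
  linarith [score_sub_score_le q hs a c]

lemma le_posScore_of_mem_posRule_addCopies (hs : AntitoneOn s (Set.Icc 1 m))
    (hw : w ∈ posRule m s (n + k) (addCopies P i k)) {L : ℕ} (hL : 1 ≤ L) (hLm : L ≤ m) :
    ((n : ℝ) - 1) * downave s m L + ((k : ℝ) + 1) * upave s L ≤
      posScore s (addCopies P i k) w := by
  refine le_of_mul_le_mul_left ?_ (show (0 : ℝ) < L by exact_mod_cast hL)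
  set T := topCandidates (P i) L
  have hcard : #T = L := card_topCandidates (P i) hLm
  have hothers : ((n : ℝ) - 1) * (L * downave s m L) ≤ ∑ c ∈ T, othersScore s P i c := by
    simpa only [hcard] using le_sum_othersScore hs P i T
  calc (L : ℝ) * (((n : ℝ) - 1) * downave s m L + ((k : ℝ) + 1) * upave s L)
      = ((n : ℝ) - 1) * (L * downave s m L) + ((k : ℝ) + 1) * (L * upave s L) := by ring
    _ ≤ ∑ c ∈ T, othersScore s P i c + ((k : ℝ) + 1) * ∑ c ∈ T, s ((P i c : ℕ) + 1) := by
      rw [sum_topCandidates (P i) s hLm]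
      gcongr
    _ = ∑ c ∈ T, posScore s (addCopies P i k) c := by
      simp only [posScore_addCopies, sum_add_distrib, mul_sum]
    _ ≤ #T • posScore s (addCopies P i k) w :=
      sum_le_card_nsmul _ _ _ fun c _ => mem_posRule.mp hw c
    _ = L * posScore s (addCopies P i k) w := by rw [hcard, nsmul_eq_mul]

lemma othersScore_add_othersScore_le (hs : AntitoneOn s (Set.Icc 1 m)) (hne : a ≠ w) :
    othersScore s P i a + othersScore s P i w ≤ ((n : ℝ) - 1) * (2 * upave s 2) := by
  simpa [sum_pair hne, card_pair hne] using sum_othersScore_le hs P i {a, w}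

theorem succ_mul_upave_sub_le (hs : AntitoneOn s (Set.Icc 1 m))
    (hw : w ∈ posRule m s (n + k) (addCopies P i k))
    (ha : a ∈ posRule m s n (Function.update P i q)) (hne : a ≠ w)
    {L : ℕ} (hL : 1 ≤ L) (hLm : L ≤ m) :
    ((k : ℝ) + 1) * (upave s L - s ((P i w : ℕ) + 1)) ≤
      ((n : ℝ) - 1) * (upave s 2 - downave s m L) + (s 1 - s m) / 2 := by
  have hlow := le_posScore_of_mem_posRule_addCopies hs hw hL hLm
  rw [posScore_addCopies] at hlow
  have hsum := othersScore_add_othersScore_le (P := P) (i := i) hs hne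
  have hdiff := othersScore_sub_le_of_mem_posRule_update hs ha w
  linarith

theorem succ_mul_sub_lt (hs : AntitoneOn s (Set.Icc 1 m))
    (hw : w ∈ posRule m s (n + k) (addCopies P i k))
    (ha : a ∈ posRule m s n (Function.update P i q)) (hlt : P i a < P i w)
    (htie : ¬(a ∈ posRule m s (n + k) (addCopies P i k) ∧
      w ∈ posRule m s n (Function.update P i q))) :
    ((k : ℝ) + 1) * (s (P i w) - s ((P i w : ℕ) + 1)) < s 1 - s m := by
  by_contra! hge
  have hscore : s (P i w) ≤ s ((P i a : ℕ) + 1) :=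
    hs (position_mem_Icc (P i) a) ⟨Nat.one_le_of_lt hlt, (P i w).is_lt.le⟩ hlt
  have hgain : s 1 - s m ≤ ((k : ℝ) + 1) * (s ((P i a : ℕ) + 1) - s ((P i w : ℕ) + 1)) :=
    hge.trans (by gcongr)
  refine htie ⟨mem_posRule_of_le hw ?_, mem_posRule_of_le ha ?_⟩
  · rw [posScore_addCopies, posScore_addCopies]
    linarith [othersScore_sub_le_of_mem_posRule_update hs ha w]
  · have hwa := mem_posRule.mp hw a
    rw [posScore_addCopies, posScore_addCopies] at hwa
    rw [posScore_update, posScore_update]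
    linarith [score_sub_score_le q hs a w]

end Winners

section Uval

variable {s : ℕ → ℝ} {m n ℓ : ℕ} {x : ℝ}

lemma lbar_mem (hℓ : 2 ≤ ℓ) (h : s (ℓ + 1) < s 1) :
    lbar s ℓ ∈ (Icc 1 (ℓ - 1)).filter fun t => s (ℓ + 1) < s t := by
  have hne : ((Icc 1 (ℓ - 1)).filter fun t => s (ℓ + 1) < s t).Nonempty :=
    ⟨1, mem_filter.mpr ⟨mem_Icc.mpr ⟨le_rfl, by omega⟩, h⟩⟩
  obtain ⟨t, ht, hsup⟩ := exists_mem_eq_sup _ hne id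
  rwa [lbar, hsup]

lemma lt_upave_lbar (hs : AntitoneOn s (Set.Icc 1 ℓ)) (hℓ : 2 ≤ ℓ) (h : s (ℓ + 1) < s 1) :
    s (ℓ + 1) < upave s (lbar s ℓ) := by
  obtain ⟨hmem, hlt⟩ := mem_filter.mp (lbar_mem hℓ h)
  have hbounds := mem_Icc.mp hmem
  exact hlt.trans_le (le_upave (hs.mono (Set.Icc_subset_Icc le_rfl (by omega))) hbounds.1)

lemma lt_one_div_sub_one {d : ℝ} (hd : 0 < d) (h : (x + 1) * d < 1) : x < 1 / d - 1 :=
  lt_sub_iff_add_lt.mpr ((lt_div_iff₀ hd).mpr h)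

theorem lt_Uval (hs : AntitoneOn s (Set.Icc 1 (ℓ + 1))) (h12 : s 2 < s 1) (hℓ : 1 ≤ ℓ)
    (hdrop : (x + 1) * (s ℓ - s (ℓ + 1)) < 1)
    (havg : 2 ≤ ℓ → x * (upave s (lbar s ℓ) - s (ℓ + 1)) <
      ((n : ℝ) - 1) * (upave s 2 - downave s m (lbar s ℓ)) + 1 / 2) :
    x < Uval s n m ℓ := by
  obtain rfl | hℓ₂ := hℓ.eq_or_lt
  · simpa [Uval] using lt_one_div_sub_one (sub_pos.mpr h12) hdrop
  · have hlt : s (ℓ + 1) < s 1 :=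
      (hs ⟨by omega, by omega⟩ ⟨by omega, by omega⟩ (by omega)).trans_lt h12
    have hden : 0 < upave s (lbar s ℓ) - s (ℓ + 1) :=
      sub_pos.mpr (lt_upave_lbar (hs.mono (Set.Icc_subset_Icc le_rfl (by omega))) hℓ₂ hlt)
    have hquot := (lt_div_iff₀ hden).mpr (havg hℓ₂)
    rw [Uval, if_neg hℓ₂.ne']
    split_ifs with heq
    · exact hquot
    · have hle : s (ℓ + 1) ≤ s ℓ := hs ⟨hℓ, by omega⟩ ⟨by omega, le_rfl⟩ (by omega)
      exact lt_min (lt_one_div_sub_one (sub_pos.mpr (hle.lt_of_ne' heq)) hdrop) hquot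

end Uval

theorem lt_Uval_of_manipulation {m n k : ℕ} {s : ℕ → ℝ} {P : Profile m n} {i : Fin n}
    {q : Pref m} {a w : Fin m} (hs : AntitoneOn s (Set.Icc 1 m)) (h12 : s 2 < s 1)
    (hspread : s 1 - s m ≤ 1) (hw : w ∈ posRule m s (n + k) (addCopies P i k))
    (ha : a ∈ posRule m s n (Function.update P i q)) (hlt : P i a < P i w)
    (htie : ¬(a ∈ posRule m s (n + k) (addCopies P i k) ∧
      w ∈ posRule m s n (Function.update P i q))) :
    (k : ℝ) < Uval s n m (P i w) := by
  have hℓ : 1 ≤ (P i w : ℕ) := Nat.one_le_of_lt hlt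
  have hs' : AntitoneOn s (Set.Icc 1 ((P i w : ℕ) + 1)) :=
    hs.mono (Set.Icc_subset_Icc le_rfl (P i w).is_lt)
  refine lt_Uval hs' h12 hℓ ((succ_mul_sub_lt hs hw ha hlt htie).trans_le hspread) fun hℓ₂ => ?_
  have hbelow : s ((P i w : ℕ) + 1) < s 1 :=
    (hs' ⟨by omega, by omega⟩ ⟨by omega, le_rfl⟩ (by omega)).trans_lt h12
  have hlbar := mem_Icc.mp (mem_filter.mp (lbar_mem hℓ₂ hbelow)).1
  have hupave : s ((P i w : ℕ) + 1) < upave s (lbar s (P i w)) :=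
    lt_upave_lbar (hs'.mono (Set.Icc_subset_Icc le_rfl (by omega))) hℓ₂ hbelow
  linarith [succ_mul_upave_sub_le hs hw ha (ne_of_apply_ne (P i) hlt.ne) hlbar.1 (by omega)]

/-- For any positional scoring rule with `s 1 ≠ s 2`, the rule is
`k`-augmentation strategyproof for every `k ≥ max_{ℓ ∈ {1,…,m−1}} U_s(ℓ)`;
consequently `Φ(F_s) ≤ max_ℓ U_s(ℓ)`. -/
theorem posRule_kASP_of_Uval_le (m n : ℕ) [NeZero m] (hm : 3 ≤ m) (hn : 2 ≤ n)
    (s : ℕ → ℝ) (hs1 : s 1 = 1) (hsm : s m = 0)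
    (hmono : ∀ j : ℕ, 1 ≤ j → j < m → s (j + 1) ≤ s j)
    (hs12 : s 1 ≠ s 2) :
    ∀ k : ℕ,
      (Finset.Icc 1 (m - 1)).sup' (Finset.nonempty_Icc.mpr (by omega))
          (fun ℓ => Uval s n m ℓ) ≤ (k : ℝ) →
        kASP m n (posRule m s) k := by
  intro k hk τ P i q
  by_contra! hcon
  have hs : AntitoneOn s (Set.Icc 1 m) :=
    antitoneOn_of_add_one_le Set.ordConnected_Icc fun j _ hj hj' => hmono j hj.1 hj'.2
  have h12 : s 2 < s 1 := (hmono 1 le_rfl (by omega)).lt_of_ne' hs12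
  have hlt : (k : ℝ) < Uval s n m (P i (tiebreak τ (posRule m s (n + k) (addCopies P i k)))) :=
    lt_Uval_of_manipulation hs h12 (by simp [hs1, hsm]) (tiebreak_mem τ (posRule_nonempty s _))
      (tiebreak_mem τ (posRule_nonempty s _)) hcon
      fun ⟨hmem, hmem'⟩ => hcon.ne (congrArg (P i) (tiebreak_eq_of_mem_of_mem hmem' hmem))
  refine (hlt.trans_le (le_trans (le_sup' (Uval s n m) ?_) hk)).false
  rw [mem_Icc]
  omega
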